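/- arXiv:2010.08994 — 3 statements merged into one kernel-verified Lean document; each statement's English description precedes it below -/
import Mathlib

section
/- There is an absolute constant C > 0 such that the following holds. Let f : {0,1}^n → {0,1} be a boolean function with n ≥ 2 and sparsity spar(f) = r ≥ 2. Then the L1 norm of the coefficients of the multilinear polynomial computing f satisfies ‖f‖₁ = Σ_{s ⊆ [n]} |f̂(s)| ≤ n^{C·(log₂ r)^5}. -/
/-- The coefficient of the monomial `s` in the unique multilinear polynomial computing
`f : {0,1}^n → ℝ`, given by Möbius inversion. -/
noncomputable def coeff {n : ℕ} (f : Finset (Fin n) → ℝ) (s : Finset (Fin n)) : ℝ :=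
  ∑ t ∈ s.powerset, (-1 : ℝ) ^ (s.card - t.card) * f t

/-- The sparsity of `f`: the number of nonzero coefficients. -/
noncomputable def sparsity {n : ℕ} (f : Finset (Fin n) → ℝ) : ℕ :=
  {s : Finset (Fin n) | coeff f s ≠ 0}.ncard


open Polynomial in
theorem markov01 (p : ℝ[X]) (d : ℕ) (hd : p.natDegree ≤ d)
    (hp : ∀ x : ℝ, 0 ≤ x → x ≤ 1 → 0 ≤ p.eval x ∧ p.eval x ≤ 1) :
    |p.coeff 1| ≤ (d:ℝ)^2 := by
  have key : ∀ q : ℝ[X], q.natDegree ≤ d →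
      (∀ x : ℝ, 0 ≤ x → x ≤ 1 → 0 ≤ q.eval x ∧ q.eval x ≤ 1) → -q.coeff 1 ≤ (d:ℝ)^2 := by
    intro q hq hq1
    set P : ℝ[X] := C 2 * q.comp (C (1/2) - C (1/2) * X) - 1 with hP
    have hdeg : P.degree ≤ d := by
      apply degree_le_of_natDegree_le
      rw [hP]
      refine (natDegree_sub_le _ _).trans ?_
      simp only [natDegree_one, zero_le, sup_of_le_left]
      refine (natDegree_C_mul_le _ _).trans ?_
      refine natDegree_comp_le.trans ?_
      have : (C (1/2:ℝ) - C (1/2) * X).natDegree ≤ 1 := by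
        refine (natDegree_sub_le _ _).trans ?_
        simp only [natDegree_C, zero_le, sup_of_le_right]
        exact (natDegree_C_mul_le _ _).trans natDegree_X_le
      nlinarith
    have hb : ∀ x ∈ Set.Icc (-1:ℝ) 1, |P.eval x| ≤ 1 := by
      intro x hx
      have := hq1 (1/2 - 1/2 * x) (by linarith [hx.2]) (by linarith [hx.1])
      rw [abs_le]
      simp only [hP, eval_sub, eval_mul, eval_C, eval_comp, eval_X, eval_one]
      constructor <;> linarith
    have h := Polynomial.Chebyshev.eval_iterate_derivative_le_of_forall_abs_le_one (k := 1)
      (x := 1) le_rfl hdeg hb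
    simp only [Function.iterate_one, Polynomial.Chebyshev.derivative_T_eval_one] at h
    have h2 : (derivative P).eval 1 = - q.coeff 1 := by
      rw [hP]
      simp [derivative_comp]
      rw [← coeff_zero_eq_eval_zero, coeff_derivative]
      simp
    rw [h2] at h
    simpa using h
  rw [abs_le]
  constructor
  · linarith [key p hd hp]
  · have := key (1 - p) ((natDegree_sub_le _ _).trans (by simpa using hd)) (by
      intro x h0 h1
      have := hp x h0 h1
      simp only [eval_sub, eval_one]
      constructor <;> linarith)
    have h1 : (1 - p).coeff 1 = - p.coeff 1 := by
      simp [coeff_one]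
    rw [h1] at this
    linarith

theorem sum_biased {ι : Type} [DecidableEq ι] (A T : Finset ι) (hT : T ⊆ A) (μ : ℝ) :
    ∑ y ∈ A.powerset, (if T ⊆ y then μ ^ y.card * (1-μ) ^ (A \ y).card else 0) = μ ^ T.card := by
  have h := Finset.prod_add (fun _ : ι => μ) (fun i => if i ∈ T then 0 else 1 - μ) A
  have h1 : ∏ i ∈ A, (μ + if i ∈ T then 0 else 1 - μ) = μ ^ T.card := by
    have : ∀ i ∈ A, (μ + if i ∈ T then 0 else 1 - μ) = if i ∈ T then μ else 1 := by
      intro i _; split_ifs <;> ring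
    rw [Finset.prod_congr rfl this, Finset.prod_ite_mem, Finset.inter_eq_right.mpr hT]
    simp
  rw [← h1, h]
  apply Finset.sum_congr rfl
  intro y hy
  rw [Finset.mem_powerset] at hy
  split_ifs with hTy
  · rw [Finset.prod_const]
    congr 1
    rw [← Finset.prod_const]
    apply Finset.prod_congr rfl
    intro i hi
    rw [if_neg]
    intro hiT
    exact (Finset.mem_sdiff.1 hi).2 (hTy hiT)
  · obtain ⟨i, hiT, hiy⟩ := Finset.not_subset.1 hTy
    symm
    rw [Finset.prod_eq_zero (i := i) (Finset.mem_sdiff.2 ⟨hT hiT, hiy⟩) (by simp [hiT])]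
    simp

open Polynomial in
theorem sens_deg {ι σ : Type} [DecidableEq ι] (R : Finset σ) (T : σ → Finset ι)
    (c : σ → ℝ) (d : ℕ) (A : Finset ι) (ε : ℝ) (hε : |ε| = 1)
    (hG : ∀ y : Finset ι, 0 ≤ ∑ s ∈ R with T s ⊆ y, c s ∧ ∑ s ∈ R with T s ⊆ y, c s ≤ 1)
    (hdeg : ∀ s ∈ R, T s ⊆ A → (T s).card ≤ d)
    (hs : ∀ i ∈ A, ∑ s ∈ R with T s ⊆ {i}, c s - ∑ s ∈ R with T s ⊆ ∅, c s = ε) :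
    (A.card : ℝ) ≤ (d:ℝ)^2 := by
  classical
  set p : ℝ[X] := ∑ s ∈ R with T s ⊆ A, C (c s) * X ^ (T s).card with hp
  have hpd : p.natDegree ≤ d := by
    rw [hp]
    apply natDegree_sum_le_of_forall_le
    intro s hs
    rw [Finset.mem_filter] at hs
    exact (natDegree_C_mul_X_pow_le _ _).trans (hdeg s hs.1 hs.2)
  have hev : ∀ μ : ℝ, p.eval μ = ∑ y ∈ A.powerset,
      (μ ^ y.card * (1-μ) ^ (A \ y).card) * ∑ s ∈ R with T s ⊆ y, c s := by
    intro μ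
    have e1 : p.eval μ = ∑ s ∈ R with T s ⊆ A, c s * μ ^ (T s).card := by
      simp [hp, eval_finsetSum]
    rw [e1]
    have e2 : ∀ s ∈ R.filter (fun s => T s ⊆ A), c s * μ ^ (T s).card =
        ∑ y ∈ A.powerset, (if T s ⊆ y then (μ ^ y.card * (1-μ) ^ (A \ y).card) * c s else 0) := by
      intro s hs
      rw [← sum_biased A (T s) (Finset.mem_filter.1 hs).2 μ, Finset.mul_sum]
      apply Finset.sum_congr rfl
      intro y _
      split_ifs <;> ring
    rw [Finset.sum_congr rfl e2, Finset.sum_comm]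
    apply Finset.sum_congr rfl
    intro y hy
    rw [Finset.mul_sum, ← Finset.sum_filter, Finset.filter_filter]
    apply Finset.sum_congr _ (fun _ _ => rfl)
    ext s
    simp only [Finset.mem_filter]
    constructor
    · rintro ⟨a, b, c⟩; exact ⟨a, c⟩
    · rintro ⟨a, b⟩; exact ⟨a, b.trans (Finset.mem_powerset.1 hy), b⟩
  have hb : ∀ x : ℝ, 0 ≤ x → x ≤ 1 → 0 ≤ p.eval x ∧ p.eval x ≤ 1 := by
    intro x h0 h1
    have hw : ∀ y : Finset ι, 0 ≤ x ^ y.card * (1-x) ^ (A \ y).card := fun y =>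
      mul_nonneg (pow_nonneg h0 _) (pow_nonneg (by linarith) _)
    rw [hev]
    constructor
    · exact Finset.sum_nonneg fun y _ => mul_nonneg (hw y) (hG y).1
    · have := sum_biased A ∅ (by simp) x
      simp only [Finset.empty_subset, if_true, Finset.card_empty, pow_zero] at this
      refine le_trans ?_ this.le
      exact Finset.sum_le_sum fun y _ => mul_le_of_le_one_right (hw y) (hG y).2
  have hm := markov01 p d hpd hb
  have hc : p.coeff 1 = A.card * ε := by
    have e1 : p.coeff 1 = ∑ s ∈ R with T s ⊆ A, if (T s).card = 1 then c s else 0 := by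
      simp only [hp, finsetSum_coeff, coeff_C_mul_X_pow]
      apply Finset.sum_congr rfl
      intro s _
      simp [eq_comm]
    have e2 : ∀ i ∈ A, ε = ∑ s ∈ R with T s ⊆ A, if T s = {i} then c s else 0 := by
      intro i hi
      rw [← hs i hi, ← Finset.sum_filter, Finset.filter_filter, sub_eq_iff_eq_add,
        ← Finset.sum_union]
      · apply Finset.sum_congr _ (fun _ _ => rfl)
        ext s
        simp only [Finset.mem_union, Finset.mem_filter, Finset.subset_singleton_iff,
          Finset.subset_empty]
        constructor
        · rintro ⟨h, h' | h'⟩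
          · exact Or.inr ⟨h, h'⟩
          · exact Or.inl ⟨h, by simp [h', hi], h'⟩
        · rintro (⟨h, _, h'⟩ | ⟨h, h'⟩)
          · exact ⟨h, Or.inr h'⟩
          · exact ⟨h, Or.inl h'⟩
      · rw [Finset.disjoint_left]
        intro s h1 h2
        simp only [Finset.mem_filter, Finset.subset_empty] at h1 h2
        rw [h2.2] at h1
        simpa using h1.2.2.symm
    rw [e1, ← nsmul_eq_mul, ← Finset.sum_const, Finset.sum_congr rfl e2, Finset.sum_comm]
    apply Finset.sum_congr rfl
    intro s hs
    rw [Finset.mem_filter] at hs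
    split_ifs with h
    · obtain ⟨i, hi⟩ := Finset.card_eq_one.1 h
      rw [hi]
      have : i ∈ A := hs.2 (by simp [hi])
      simp [this]
    · symm
      apply Finset.sum_eq_zero
      intro i _
      rw [if_neg]
      intro h'; apply h; simp [h']
  rw [hc, abs_mul, hε] at hm
  simpa using hm

theorem mbs_abs {ι σ : Type} [DecidableEq ι] [Fintype ι] (R : Finset σ) (T : σ → Finset ι)
    (c : σ → ℝ) (d : ℕ) (ε : ℝ) (hε : |ε| = 1)
    (hG : ∀ y : Finset ι, 0 ≤ ∑ s ∈ R with T s ⊆ y, c s ∧ ∑ s ∈ R with T s ⊆ y, c s ≤ 1)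
    (hR : 4 * R.card ≤ 2 ^ d)
    (hs : ∀ i, ∑ s ∈ R with T s ⊆ {i}, c s - ∑ s ∈ R with T s ⊆ ∅, c s = ε) :
    (Fintype.card ι) ≤ 4 * d^2 := by
  classical
  set k := Fintype.card ι with hk
  rcases Nat.eq_zero_or_pos k with h0 | hkpos
  · omega
  let N : Finset ι → ℕ := fun A => (R.filter (fun s => d < (T s).card ∧ T s ⊆ A)).card
  have hsum1 : ∑ A : Finset ι, 2 * (A.card:ℝ) = k * 2 ^ k := by
    have e : ∑ A : Finset ι, (A.card:ℝ) = ∑ A : Finset ι, (Aᶜ.card:ℝ) :=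
      by
      apply Finset.sum_bij (fun A _ => Aᶜ)
      · simp
      · intro a _ b _ h; exact compl_injective h
      · intro b _; exact ⟨bᶜ, by simp, by simp⟩
      · intro a _; simp only [compl_compl]
    have : ∑ A : Finset ι, 2 * (A.card:ℝ) = ∑ A : Finset ι, ((A.card:ℝ) + (Aᶜ.card:ℝ)) := by
      rw [Finset.sum_add_distrib, ← e, ← Finset.mul_sum]; ring
    rw [this]
    have h2 : ∀ A : Finset ι, ((A.card:ℝ) + (Aᶜ.card:ℝ)) = k := by
      intro A
      exact_mod_cast Finset.card_add_card_compl A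
    simp [h2, hk]
    ring
  have hsum2 : 4 * ∑ A : Finset ι, (N A : ℝ) ≤ 2 ^ k := by
    have e1 : ∑ A : Finset ι, (N A) = ∑ s ∈ R, if d < (T s).card then 2 ^ (k - (T s).card) else 0 := by
      simp only [N, Finset.card_filter]
      rw [Finset.sum_comm]
      apply Finset.sum_congr rfl
      intro s _
      split_ifs with h
      · simp only [h, true_and]
        rw [← Finset.card_filter]
        have : (Finset.univ.filter (fun A => T s ⊆ A)) = Finset.Icc (T s) Finset.univ := by
          ext A; simp
        rw [this, Finset.card_Icc_finset (Finset.subset_univ _), Finset.card_univ]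
      · simp [h]
    have e2 : 2 ^ d * ∑ A : Finset ι, (N A) ≤ R.card * 2 ^ k := by
      rw [e1, Finset.mul_sum, ← smul_eq_mul (a := R.card), ← Finset.sum_const]
      apply Finset.sum_le_sum
      intro s _
      split_ifs with h
      · rw [← pow_add]
        apply Nat.pow_le_pow_right (by norm_num)
        have : (T s).card ≤ k := Finset.card_le_univ _
        omega
      · simp
    have e3 : 4 * ∑ A : Finset ι, (N A) ≤ 2 ^ k := by
      have h4 : 2 ^ d * (4 * ∑ A : Finset ι, (N A)) ≤ 2 ^ d * 2 ^ k := by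
        calc 2 ^ d * (4 * ∑ A : Finset ι, (N A)) = 4 * (2 ^ d * ∑ A : Finset ι, (N A)) := by ring
          _ ≤ 4 * (R.card * 2 ^ k) := by gcongr
          _ = (4 * R.card) * 2 ^ k := by ring
          _ ≤ _ := by gcongr
      exact Nat.le_of_mul_le_mul_left h4 (by positivity)
    exact_mod_cast e3
  have hex : ∃ A : Finset ι, (k:ℝ) ≤ 4 * (A.card - k * N A) := by
    by_contra hcon
    push Not at hcon
    have : ∑ A : Finset ι, 4 * ((A.card:ℝ) - k * N A) < ∑ A : Finset ι, (k:ℝ) :=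
      Finset.sum_lt_sum_of_nonempty Finset.univ_nonempty (fun A _ => hcon A)
    rw [← Finset.mul_sum, Finset.sum_sub_distrib, ← Finset.mul_sum] at this
    rw [← Finset.mul_sum] at hsum1
    simp only [Finset.sum_const, Finset.card_univ, Fintype.card_finset, nsmul_eq_mul] at this
    push_cast at this
    rw [← hk] at this
    have hk' : (0:ℝ) < k := by exact_mod_cast hkpos
    nlinarith
  obtain ⟨A, hA⟩ := hex
  have hAk : (A.card:ℝ) ≤ k := by exact_mod_cast Finset.card_le_univ A
  have hk' : (0:ℝ) < k := by exact_mod_cast hkpos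
  have hN : N A = 0 := by
    by_contra h
    have : (1:ℝ) ≤ N A := by exact_mod_cast Nat.one_le_iff_ne_zero.2 h
    nlinarith
  rw [hN] at hA
  have := sens_deg R T c d A ε hε hG (by
    intro s hsR hsA
    by_contra h
    rw [Finset.card_eq_zero, Finset.filter_eq_empty_iff] at hN
    exact hN hsR ⟨by omega, hsA⟩) (fun i _ => hs i)
  have h3 : (k:ℝ) ≤ 4 * (d:ℝ)^2 := by
    simp at hA; linarith
  exact_mod_cast h3

noncomputable def ev {α : Type} [DecidableEq α] (c : Finset α → ℝ) (x : Finset α) : ℝ :=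
  ∑ s ∈ x.powerset, c s

theorem mbs_ev {α ι : Type} [DecidableEq α] [Fintype α] [DecidableEq ι] [Fintype ι]
    (c : Finset α → ℝ) (hb : ∀ x, ev c x = 0 ∨ ev c x = 1) (d : ℕ)
    (hR : 4 * (Finset.univ.filter (fun s => c s ≠ 0)).card ≤ 2 ^ d)
    (z : Finset α) (W : ι → Finset α) (hW : ∀ i j, i ≠ j → W i ∩ W j ⊆ z)
    (hs : ∀ i, ev c (z ∪ W i) ≠ ev c z) : Fintype.card ι ≤ 4 * d ^ 2 := by
  classical
  set R := Finset.univ.filter (fun s => c s ≠ 0 ∧ s ⊆ z ∪ Finset.univ.biUnion W) with hRdef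
  let T : Finset α → Finset ι := fun s => Finset.univ.filter (fun i => ¬ (s ∩ W i ⊆ z))
  have hG : ∀ y : Finset ι, ∑ s ∈ R with T s ⊆ y, c s = ev c (z ∪ y.biUnion W) := by
    intro y
    unfold ev
    apply Finset.sum_subset_zero_on_sdiff
    · intro s hs
      simp only [hRdef, Finset.mem_filter, Finset.mem_univ, true_and] at hs
      rw [Finset.mem_powerset]
      intro j hj
      have h1 := hs.1.2 hj
      by_cases hz : j ∈ z
      · simp [hz]
      · simp only [Finset.mem_union, hz, Finset.mem_biUnion, Finset.mem_univ, true_and, false_or] at h1 ⊢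
        obtain ⟨i, hi⟩ := h1
        refine ⟨i, hs.2 ?_, hi⟩
        simp only [T, Finset.mem_filter, Finset.mem_univ, true_and]
        intro h
        exact hz (h (Finset.mem_inter.2 ⟨hj, hi⟩))
    · intro s hs
      rw [Finset.mem_sdiff, Finset.mem_powerset] at hs
      by_contra hc
      apply hs.2
      simp only [hRdef, Finset.mem_filter, Finset.mem_univ, true_and]
      refine ⟨⟨hc, hs.1.trans (Finset.union_subset_union_right
        (Finset.biUnion_subset_biUnion_of_subset_left _ (Finset.subset_univ _)))⟩, ?_⟩
      intro i hi
      simp only [T, Finset.mem_filter, Finset.mem_univ, true_and] at hi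
      obtain ⟨j, hj, hjz⟩ := Finset.not_subset.1 hi
      rw [Finset.mem_inter] at hj
      have := hs.1 hj.1
      simp only [Finset.mem_union, hjz, false_or, Finset.mem_biUnion] at this
      obtain ⟨i', hi', hji'⟩ := this
      by_cases h : i = i'
      · rwa [h]
      · exact absurd (hW i i' h (Finset.mem_inter.2 ⟨hj.2, hji'⟩)) hjz
    · intros; rfl
  have hRc : 4 * R.card ≤ 2 ^ d := by
    refine le_trans ?_ hR
    gcongr
    intro s hs
    simp only [hRdef, Finset.mem_filter, Finset.mem_univ, true_and] at hs ⊢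
    exact hs.1
  apply mbs_abs R T c d (1 - 2 * ev c z) ?_ ?_ hRc ?_
  · rcases hb z with h | h <;> rw [h] <;> norm_num
  · intro y
    rw [hG]
    rcases hb (z ∪ y.biUnion W) with h | h <;> rw [h] <;> norm_num
  · intro i
    rw [hG, hG]
    simp only [Finset.singleton_biUnion, Finset.biUnion_empty, Finset.union_empty]
    have := hs i
    rcases hb z with h | h <;> rcases hb (z ∪ W i) with h' | h' <;> rw [h, h'] at this ⊢ <;>
      first | exact absurd rfl this | norm_num

def Frac {α : Type} [DecidableEq α] (c : Finset α → ℝ) (F : ℝ) : Prop :=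
  ∀ (z : Finset α) (Ω : Type) [Fintype Ω] (μ : Ω → ℝ) (W : Ω → Finset α) (m : ℝ),
    0 ≤ m → (∀ ω, 0 ≤ μ ω) → (∀ ω, μ ω ≠ 0 → ev c (z ∪ W ω) ≠ ev c z) →
    (∀ j, j ∉ z → ∑ ω, (if j ∈ W ω then μ ω else 0) ≤ m) → ∑ ω, μ ω ≤ F * m

theorem frac_mono {α : Type} [DecidableEq α] (c : Finset α → ℝ) {F G : ℝ} (h : F ≤ G)
    (hF : Frac c F) : Frac c G := by
  intro z Ω _ μ W m hm h1 h2 h3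
  exact (hF z Ω μ W m hm h1 h2 h3).trans (by gcongr)

theorem frac_card {α : Type} [DecidableEq α] [Fintype α] (c : Finset α → ℝ) :
    Frac c (Fintype.card α) := by
  intro z Ω _ μ W m hm h1 h2 h3
  calc ∑ ω, μ ω ≤ ∑ ω, ∑ j ∈ zᶜ, (if j ∈ W ω then μ ω else 0) := by
        apply Finset.sum_le_sum
        intro ω _
        by_cases h0 : μ ω = 0
        · simp [h0]
        · have := h2 ω h0
          have hne : ¬ W ω ⊆ z := by
            intro h; apply this; rw [Finset.union_eq_left.2 h]
          obtain ⟨j, hj, hjz⟩ := Finset.not_subset.1 hne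
          have := Finset.single_le_sum (f := fun j => if j ∈ W ω then μ ω else 0) (s := zᶜ)
            (fun j _ => by split_ifs <;> simp [h1 ω]) (Finset.mem_compl.2 hjz)
          simpa [hj] using this
    _ = ∑ j ∈ zᶜ, ∑ ω, (if j ∈ W ω then μ ω else 0) := Finset.sum_comm
    _ ≤ ∑ j ∈ zᶜ, m := Finset.sum_le_sum fun j hj => h3 j (Finset.mem_compl.1 hj)
    _ = (zᶜ.card : ℝ) * m := by simp
    _ ≤ _ := by
        gcongr
        exact Finset.card_le_univ _

/-- union of pairwise intersections -/
def pairU {α Ω : Type} [DecidableEq α] [Fintype α] {k : ℕ} (W : Ω → Finset α) (ω : Fin k → Ω) :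
    Finset α :=
  Finset.univ.filter (fun j => ∃ a b, a ≠ b ∧ j ∈ W (ω a) ∧ j ∈ W (ω b))

theorem pair_marg {α Ω : Type} [DecidableEq α] [Fintype α] [Fintype Ω] (k : ℕ) (μ : Ω → ℝ)
    (W : Ω → Finset α) (hμ : ∀ ω, 0 ≤ μ ω) (h1 : ∑ ω, μ ω = 1) (q : ℝ)
    (j : α) (hj : ∑ ω, (if j ∈ W ω then μ ω else 0) ≤ q) :
    ∑ ω : Fin k → Ω, (if j ∈ pairU W ω then ∏ a, μ (ω a) else 0) ≤ (k:ℝ)^2 * q^2 := by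
  classical
  have hq0 : 0 ≤ ∑ ω, (if j ∈ W ω then μ ω else 0) :=
    Finset.sum_nonneg fun ω _ => by split_ifs <;> simp [hμ ω]
  have hP : ∀ ω : Fin k → Ω, 0 ≤ ∏ a, μ (ω a) := fun ω => Finset.prod_nonneg fun a _ => hμ _
  have hpair : ∀ a b : Fin k, a ≠ b →
      ∑ ω : Fin k → Ω, (if j ∈ W (ω a) ∧ j ∈ W (ω b) then ∏ e, μ (ω e) else 0) ≤ q^2 := by
    intro a b hab
    have e := Fintype.prod_sum (fun (e : Fin k) (ω : Ω) =>
      if e ∈ ({a, b} : Finset (Fin k)) then (if j ∈ W ω then μ ω else 0) else μ ω)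
    have e1 : ∀ ω : Fin k → Ω, (if j ∈ W (ω a) ∧ j ∈ W (ω b) then ∏ e, μ (ω e) else 0) =
        ∏ e, (if e ∈ ({a, b} : Finset (Fin k)) then (if j ∈ W (ω e) then μ (ω e) else 0)
          else μ (ω e)) := by
      intro ω
      split_ifs with h
      · apply Finset.prod_congr rfl
        intro e _
        simp only [Finset.mem_insert, Finset.mem_singleton]
        by_cases hea : e = a
        · subst hea; simp [h.1]
        · by_cases heb : e = b
          · subst heb; simp [h.2]
          · simp [hea, heb]
      · symm
        by_cases ha : j ∈ W (ω a)
        · have hb : j ∉ W (ω b) := fun hb => h ⟨ha, hb⟩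
          exact Finset.prod_eq_zero (Finset.mem_univ b) (by simp [hb])
        · exact Finset.prod_eq_zero (Finset.mem_univ a) (by simp [ha])
    rw [Finset.sum_congr rfl (fun ω _ => e1 ω), ← e]
    have e2 : ∀ e : Fin k, (∑ ω, if e ∈ ({a, b} : Finset (Fin k)) then (if j ∈ W ω then μ ω else 0)
        else μ ω) = if e ∈ ({a, b} : Finset (Fin k)) then (∑ ω, if j ∈ W ω then μ ω else 0) else 1 := by
      intro e
      split_ifs
      · rfl
      · exact h1
    rw [Finset.prod_congr rfl (fun e _ => e2 e), Finset.prod_ite_mem, Finset.univ_inter,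
      Finset.prod_pair hab, ← sq]
    gcongr
  calc ∑ ω : Fin k → Ω, (if j ∈ pairU W ω then ∏ a, μ (ω a) else 0)
      ≤ ∑ ω : Fin k → Ω, ∑ a, ∑ b, (if a ≠ b then
          (if j ∈ W (ω a) ∧ j ∈ W (ω b) then ∏ e, μ (ω e) else 0) else 0) := by
        apply Finset.sum_le_sum
        intro ω _
        have hnn : ∀ a b, 0 ≤ (if a ≠ b then
          (if j ∈ W (ω a) ∧ j ∈ W (ω b) then ∏ e, μ (ω e) else 0) else 0) := by
          intro a b; split_ifs <;> simp [hP ω]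
        split_ifs with h
        · simp only [pairU, Finset.mem_filter, Finset.mem_univ, true_and] at h
          obtain ⟨a, b, hab, ha, hb⟩ := h
          calc ∏ a, μ (ω a) = (if a ≠ b then
            (if j ∈ W (ω a) ∧ j ∈ W (ω b) then ∏ e, μ (ω e) else 0) else 0) := by simp [hab, ha, hb]
            _ ≤ ∑ b, (if a ≠ b then
            (if j ∈ W (ω a) ∧ j ∈ W (ω b) then ∏ e, μ (ω e) else 0) else 0) :=
              Finset.single_le_sum (f := fun b => (if a ≠ b then
                (if j ∈ W (ω a) ∧ j ∈ W (ω b) then ∏ e, μ (ω e) else 0) else 0))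
                (fun b _ => hnn a b) (Finset.mem_univ b)
            _ ≤ _ := Finset.single_le_sum (f := fun a => ∑ b, (if a ≠ b then
                (if j ∈ W (ω a) ∧ j ∈ W (ω b) then ∏ e, μ (ω e) else 0) else 0))
                (fun a _ => Finset.sum_nonneg fun b _ => hnn a b) (Finset.mem_univ a)
        · exact Finset.sum_nonneg fun a _ => Finset.sum_nonneg fun b _ => hnn a b
    _ = ∑ a, ∑ b, ∑ ω : Fin k → Ω, (if a ≠ b then
          (if j ∈ W (ω a) ∧ j ∈ W (ω b) then ∏ e, μ (ω e) else 0) else 0) := by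
        rw [Finset.sum_comm]
        apply Finset.sum_congr rfl
        intro a _
        rw [Finset.sum_comm]
    _ ≤ ∑ a : Fin k, ∑ b : Fin k, q^2 := by
        apply Finset.sum_le_sum; intro a _
        apply Finset.sum_le_sum; intro b _
        by_cases h : a = b
        · simp [h]; positivity
        · simpa [h] using hpair a b h
    _ = _ := by simp; ring

theorem pair_bad {α Ω : Type} [DecidableEq α] [Fintype α] [Fintype Ω] (c : Finset α → ℝ) (F : ℝ)
    (hF : Frac c F) (k : ℕ) (μ : Ω → ℝ)
    (W : Ω → Finset α) (hμ : ∀ ω, 0 ≤ μ ω) (h1 : ∑ ω, μ ω = 1) (q : ℝ) (x : Finset α)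
    (hj : ∀ j, j ∉ x → ∑ ω, (if j ∈ W ω then μ ω else 0) ≤ q) :
    ∑ ω : Fin k → Ω, (if ev c (x ∪ pairU W ω) ≠ ev c x then ∏ a, μ (ω a) else 0)
      ≤ F * ((k:ℝ)^2 * q^2) := by
  have hP : ∀ ω : Fin k → Ω, 0 ≤ ∏ a, μ (ω a) := fun ω => Finset.prod_nonneg fun a _ => hμ _
  apply hF x (Fin k → Ω) _ (fun ω => pairU W ω) _ (by positivity)
  · intro ω; split_ifs <;> simp [hP ω]
  · intro ω h h'
    simp [h'] at h
  · intro j hjx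
    refine le_trans ?_ (pair_marg k μ W hμ h1 q j (hj j hjx))
    apply Finset.sum_le_sum
    intro ω _
    split_ifs <;> simp [hP ω]

theorem pair_bad_i {α Ω : Type} [DecidableEq α] [Fintype α] [Fintype Ω] (c : Finset α → ℝ) (F : ℝ)
    (hF : Frac c F) (hF0 : 0 ≤ F) (k : ℕ) (μ : Ω → ℝ)
    (W : Ω → Finset α) (hμ : ∀ ω, 0 ≤ μ ω) (h1 : ∑ ω, μ ω = 1) (q : ℝ) (z : Finset α)
    (hj : ∀ j, j ∉ z → ∑ ω, (if j ∈ W ω then μ ω else 0) ≤ q) (i : Fin (k+1)) :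
    ∑ ω : Fin (k+1) → Ω, (if ev c (z ∪ W (ω i) ∪ pairU W ω) ≠ ev c (z ∪ W (ω i))
      then ∏ a, μ (ω a) else 0) ≤ F * ((k:ℝ)^2 * q^2) := by
  rw [← Equiv.sum_comp (Fin.insertNthEquiv (fun _ => Ω) i), Fintype.sum_prod_type]
  have hset : ∀ (ρ : Ω) (ω : Fin k → Ω),
      z ∪ W ρ ∪ pairU W (i.insertNth (α := fun _ => Ω) ρ ω) = z ∪ W ρ ∪ pairU W ω := by
    intro ρ ω
    ext j
    simp only [Finset.mem_union, pairU, Finset.mem_filter, Finset.mem_univ, true_and]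
    constructor
    · rintro (h | ⟨a, b, hab, ha, hb⟩)
      · exact Or.inl h
      · rcases Fin.eq_self_or_eq_succAbove i a with rfl | ⟨a', rfl⟩
        · left; right; simpa using ha
        · rcases Fin.eq_self_or_eq_succAbove i b with rfl | ⟨b', rfl⟩
          · left; right; simpa using hb
          · right
            refine ⟨a', b', fun h => hab (by rw [h]), ?_, ?_⟩
            · simpa using ha
            · simpa using hb
    · rintro (h | ⟨a, b, hab, ha, hb⟩)
      · exact Or.inl h
      · right
        refine ⟨i.succAbove a, i.succAbove b, fun h => hab (Fin.succAbove_right_injective h), ?_, ?_⟩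
        · simpa using ha
        · simpa using hb
  have hq2 : 0 ≤ F * ((k:ℝ)^2 * q^2) := by positivity
  calc _ = ∑ ρ : Ω, μ ρ * ∑ ω : Fin k → Ω, (if ev c (z ∪ W ρ ∪ pairU W ω) ≠ ev c (z ∪ W ρ)
            then ∏ a, μ (ω a) else 0) := by
        apply Finset.sum_congr rfl
        intro ρ _
        rw [Finset.mul_sum]
        apply Finset.sum_congr rfl
        intro ω _
        simp only [Fin.insertNthEquiv, Equiv.coe_fn_mk, Fin.insertNth_apply_same, hset,
          Fin.prod_univ_succAbove _ i, Fin.insertNth_apply_succAbove]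
        split_ifs <;> simp
    _ ≤ ∑ ρ : Ω, μ ρ * (F * ((k:ℝ)^2 * q^2)) := by
        apply Finset.sum_le_sum
        intro ρ _
        apply mul_le_mul_of_nonneg_left _ (hμ ρ)
        apply pair_bad c F hF k μ W hμ h1 q
        intro j hjx
        exact hj j (fun h => hjx (Finset.mem_union_left _ h))
    _ = _ := by rw [← Finset.sum_mul, h1, one_mul]

theorem frac_core {α Ω : Type} [DecidableEq α] [Fintype α] [Fintype Ω] (c : Finset α → ℝ)
    (hb : ∀ x, ev c x = 0 ∨ ev c x = 1) (d : ℕ)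
    (hR : 4 * (Finset.univ.filter (fun s => c s ≠ 0)).card ≤ 2 ^ d)
    (G : ℝ) (hG : 8 * ((8 * d^2 + 1 : ℕ) : ℝ)^2 ≤ G) (hF : Frac c (2 * G)) (μ : Ω → ℝ)
    (W : Ω → Finset α) (hμ : ∀ ω, 0 ≤ μ ω) (h1 : ∑ ω, μ ω = 1) (q : ℝ) (hq : 0 ≤ q) (hqG : q * G ≤ 1)
    (z : Finset α) (hsens : ∀ ω, μ ω ≠ 0 → ev c (z ∪ W ω) ≠ ev c z)
    (hj : ∀ j, j ∉ z → ∑ ω, (if j ∈ W ω then μ ω else 0) ≤ q) : False := by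
  classical
  set k : ℕ := 8 * d^2 with hk
  set K : ℝ := ((k+1 : ℕ) : ℝ) with hK
  have hK1 : 1 ≤ K := by rw [hK]; push_cast; linarith [Nat.cast_nonneg (α := ℝ) k]
  have hGpos : 0 < G := by nlinarith
  have hbound : 2 * G * (K^2 * q^2) ≤ 1/4 := by
    have : 8 * (2 * G * (K^2 * q^2)) ≤ 2 * (q * G)^2 := by
      have : 8 * K^2 * (2 * G * q^2) ≤ G * (2 * G * q^2) := by gcongr
      nlinarith
    have h2 : (q*G)^2 ≤ 1 := by
      have : 0 ≤ q * G := by positivity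
      nlinarith
    linarith
  set P : (Fin (k+1) → Ω) → ℝ := fun ω => ∏ a, μ (ω a) with hPdef
  have hP : ∀ ω, 0 ≤ P ω := fun ω => Finset.prod_nonneg fun a _ => hμ _
  have hPsum : ∑ ω, P ω = 1 := by
    have := Fintype.prod_sum (fun (_ : Fin (k+1)) (ω : Ω) => μ ω)
    rw [hPdef, ← this]
    simp [h1]
  have hbad0 : ∑ ω, (if ev c (z ∪ pairU W ω) ≠ ev c z then P ω else 0) ≤ 1/4 :=
    (pair_bad c _ hF (k+1) μ W hμ h1 q z hj).trans hbound
  have hbadi : ∀ i, ∑ ω, (if ev c (z ∪ W (ω i) ∪ pairU W ω) ≠ ev c (z ∪ W (ω i))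
      then P ω else 0) ≤ 1/4 := by
    intro i
    refine (pair_bad_i c _ hF (by positivity) k μ W hμ h1 q z hj i).trans (le_trans ?_ hbound)
    have : (k:ℝ) ≤ K := by rw [hK]; push_cast; linarith
    gcongr
  let B0 : (Fin (k+1) → Ω) → ℝ := fun ω => if ev c (z ∪ pairU W ω) ≠ ev c z then 1 else 0
  let B : (Fin (k+1) → Ω) → Finset (Fin (k+1)) := fun ω => Finset.univ.filter
    (fun i => ev c (z ∪ W (ω i) ∪ pairU W ω) ≠ ev c (z ∪ W (ω i)))
  have htot : ∑ ω, P ω * (K * B0 ω + (B ω).card) ≤ K / 2 := by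
    have e1 : ∀ ω, P ω * (K * B0 ω + (B ω).card) =
        K * (if ev c (z ∪ pairU W ω) ≠ ev c z then P ω else 0) +
        ∑ i, (if ev c (z ∪ W (ω i) ∪ pairU W ω) ≠ ev c (z ∪ W (ω i)) then P ω else 0) := by
      intro ω
      have e2 : ((B ω).card : ℝ) =
        ∑ i, (if ev c (z ∪ W (ω i) ∪ pairU W ω) ≠ ev c (z ∪ W (ω i)) then 1 else 0) := by
        simp only [B, Finset.card_filter]; push_cast; rfl
      rw [e2, mul_add, Finset.mul_sum]
      congr 1
      · simp only [B0]; split_ifs <;> ring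
      · apply Finset.sum_congr rfl
        intro i _
        split_ifs <;> ring
    rw [Finset.sum_congr rfl (fun ω _ => e1 ω), Finset.sum_add_distrib, ← Finset.mul_sum,
      Finset.sum_comm]
    have e3 := Finset.sum_le_sum (s := Finset.univ) (fun i _ => hbadi i)
    rw [Finset.sum_const, Finset.card_univ, Fintype.card_fin, nsmul_eq_mul, ← hK] at e3
    nlinarith
  have hex : ∃ ω, P ω ≠ 0 ∧ K * B0 ω + (B ω).card ≤ K / 2 := by
    by_contra hcon
    push Not at hcon
    have : ∑ ω, P ω * (K/2) < ∑ ω, P ω * (K * B0 ω + (B ω).card) := by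
      apply Finset.sum_lt_sum
      · intro ω _
        by_cases h : P ω = 0
        · simp [h]
        · exact mul_le_mul_of_nonneg_left (hcon ω h).le (hP ω)
      · have : ∃ ω ∈ Finset.univ, P ω ≠ 0 := by
          apply Finset.exists_ne_zero_of_sum_ne_zero
          rw [hPsum]; norm_num
        obtain ⟨ω, _, h⟩ := this
        exact ⟨ω, Finset.mem_univ _, mul_lt_mul_of_pos_left (hcon ω h)
          (lt_of_le_of_ne (hP ω) (Ne.symm h))⟩
    rw [← Finset.sum_mul, hPsum] at this
    linarith
  obtain ⟨ω, hω, hle⟩ := hex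
  have hB0 : ev c (z ∪ pairU W ω) = ev c z := by
    by_contra h
    have : B0 ω = 1 := by simp [B0, h]
    rw [this] at hle
    have : (0:ℝ) ≤ (B ω).card := by positivity
    linarith
  have hμω : ∀ i, μ (ω i) ≠ 0 := by
    intro i h
    exact hω (Finset.prod_eq_zero (Finset.mem_univ i) h)
  have hBc : ((B ω).card:ℝ) ≤ K / 2 := by
    have : 0 ≤ B0 ω := by simp only [B0]; split_ifs <;> norm_num
    nlinarith
  have hgood := mbs_ev (ι := {i // i ∈ (B ω)ᶜ}) c hb d hR (z ∪ pairU W ω) (fun i => W (ω i.1))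
    (by
      intro i j hij x hx
      rw [Finset.mem_inter] at hx
      apply Finset.mem_union_right
      simp only [pairU, Finset.mem_filter, Finset.mem_univ, true_and]
      exact ⟨i.1, j.1, fun h => hij (Subtype.ext h), hx.1, hx.2⟩)
    (by
      intro i
      have hi := i.2
      simp only [B, Finset.mem_compl, Finset.mem_filter, Finset.mem_univ, true_and, not_not] at hi
      rw [hB0, Finset.union_right_comm, hi]
      exact hsens _ (hμω _))
  rw [Fintype.card_coe] at hgood
  have hcc := Finset.card_add_card_compl (B ω)
  rw [Fintype.card_fin] at hcc
  have h2 : 2 * (B ω).card ≤ k + 1 := by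
    have : (2:ℝ) * (B ω).card ≤ ((k + 1 : ℕ):ℝ) := by rw [← hK]; linarith
    exact_mod_cast this
  omega

theorem frac_half {α : Type} [DecidableEq α] [Fintype α] (c : Finset α → ℝ)
    (hb : ∀ x, ev c x = 0 ∨ ev c x = 1) (d : ℕ)
    (hR : 4 * (Finset.univ.filter (fun s => c s ≠ 0)).card ≤ 2 ^ d)
    (G : ℝ) (hG : 8 * ((8 * d^2 + 1 : ℕ) : ℝ)^2 ≤ G) (hF : Frac c (2 * G)) : Frac c G := by
  intro z Ω _ μ W m hm hμ hs hj
  by_contra hcon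
  push Not at hcon
  have hG0 : 0 ≤ G := le_trans (by positivity) hG
  set M := ∑ ω, μ ω with hM
  have hMpos : 0 < M := lt_of_le_of_lt (by positivity) hcon
  apply frac_core c hb d hR G hG hF (fun ω => μ ω / M) W (fun ω => div_nonneg (hμ ω) hMpos.le)
    (by rw [← Finset.sum_div, ← hM, div_self hMpos.ne']) (m / M) (by positivity)
    (by rw [div_mul_eq_mul_div, div_le_one hMpos]; linarith) z
    (fun ω h => hs ω (fun h0 => h (by simp [h0])))
  intro j hjz
  have := hj j hjz
  have e : ∀ ω, (if j ∈ W ω then μ ω / M else 0) = (if j ∈ W ω then μ ω else 0) / M := by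
    intro ω; split_ifs <;> simp
  rw [Finset.sum_congr rfl (fun ω _ => e ω), ← Finset.sum_div]
  gcongr

theorem frac_main {α : Type} [DecidableEq α] [Fintype α] (c : Finset α → ℝ)
    (hb : ∀ x, ev c x = 0 ∨ ev c x = 1) (d : ℕ)
    (hR : 4 * (Finset.univ.filter (fun s => c s ≠ 0)).card ≤ 2 ^ d) :
    Frac c (8 * ((8 * d^2 + 1 : ℕ) : ℝ)^2) := by
  set F := 8 * ((8 * d^2 + 1 : ℕ) : ℝ)^2 with hF
  have hF1 : 1 ≤ F := by
    rw [hF]; push_cast; nlinarith [sq_nonneg (d:ℝ)]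
  have key : ∀ t : ℕ, Frac c (F * 2 ^ t) → Frac c F := by
    intro t
    induction t with
    | zero => intro h; simpa using h
    | succ t ih =>
      intro h
      apply ih
      apply frac_half c hb d hR
      · rw [← hF]
        have : (1:ℝ) ≤ 2 ^ t := one_le_pow₀ (by norm_num)
        nlinarith
      · rw [pow_succ] at h
        convert h using 1
        ring
  apply key (Fintype.card α)
  apply frac_mono c _ (frac_card c)
  have : ((Fintype.card α : ℕ):ℝ) ≤ 2 ^ (Fintype.card α) := by
    exact_mod_cast Nat.lt_two_pow_self.le
  nlinarith [pow_pos (show (0:ℝ) < 2 by norm_num) (Fintype.card α)]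

theorem ev_coeff {n : ℕ} (f : Finset (Fin n) → ℝ) (x : Finset (Fin n)) : ev (coeff f) x = f x := by
  have h : ∀ s ∈ x.powerset, coeff f s =
      ∑ t ∈ x.powerset, if t ⊆ s then (-1 : ℝ) ^ (s.card - t.card) * f t else 0 := by
    intro s hs
    unfold coeff
    rw [← Finset.sum_filter]
    apply Finset.sum_congr _ (fun _ _ => rfl)
    ext t
    simp only [Finset.mem_powerset, Finset.mem_filter]
    exact ⟨fun h => ⟨h.trans (Finset.mem_powerset.1 hs), h⟩, fun h => h.2⟩
  unfold ev
  rw [Finset.sum_congr rfl h, Finset.sum_comm]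
  have h2 : ∀ t ∈ x.powerset, (∑ s ∈ x.powerset,
      if t ⊆ s then (-1 : ℝ) ^ (s.card - t.card) * f t else 0) = if t = x then f t else 0 := by
    intro t ht
    rw [Finset.mem_powerset] at ht
    rw [← Finset.sum_filter, ← Finset.sum_mul]
    have e : ∑ s ∈ x.powerset with t ⊆ s, (-1:ℝ) ^ (s.card - t.card) =
        ∑ u ∈ (x \ t).powerset, (-1:ℝ) ^ u.card := by
      symm
      apply Finset.sum_bij (fun u _ => t ∪ u)
      · intro u hu
        rw [Finset.mem_powerset] at hu
        simp only [Finset.mem_filter, Finset.mem_powerset]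
        exact ⟨Finset.union_subset ht (hu.trans Finset.sdiff_subset), Finset.subset_union_left⟩
      · intro u hu v hv huv
        rw [Finset.mem_powerset] at hu hv
        have d1 : Disjoint t u := Finset.disjoint_of_subset_right hu Finset.disjoint_sdiff
        have d2 : Disjoint t v := Finset.disjoint_of_subset_right hv Finset.disjoint_sdiff
        have := congrArg (· \ t) huv
        simpa [Finset.union_sdiff_cancel_left d1, Finset.union_sdiff_cancel_left d2] using this
      · intro s hs
        simp only [Finset.mem_filter, Finset.mem_powerset] at hs
        exact ⟨s \ t, Finset.mem_powerset.2 (Finset.sdiff_subset_sdiff hs.1 le_rfl),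
          Finset.union_sdiff_of_subset hs.2⟩
      · intro u hu
        rw [Finset.mem_powerset] at hu
        have d1 : Disjoint t u := Finset.disjoint_of_subset_right hu Finset.disjoint_sdiff
        rw [Finset.card_union_of_disjoint d1, Nat.add_sub_cancel_left]
    rw [e]
    have e2 := Finset.sum_powerset_neg_one_pow_card (x := x \ t)
    have e3 : ∑ u ∈ (x \ t).powerset, (-1:ℝ) ^ u.card = if x \ t = ∅ then 1 else 0 := by
      exact_mod_cast congrArg (Int.cast (R := ℝ)) e2
    rw [e3]; simp only [Finset.sdiff_eq_empty_iff_subset]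
    by_cases hx : t = x
    · simp [hx]
    · have : ¬ x ⊆ t := fun h => hx (Finset.Subset.antisymm ht h)
      simp [hx, this]
  rw [Finset.sum_congr rfl h2]
  simp

section rec
variable {α : Type} [DecidableEq α] [Fintype α]

noncomputable def supp1 (c : Finset α → ℝ) : Finset (Finset α) :=
  Finset.univ.filter (fun s => c s ≠ 0 ∧ s ≠ ∅)

theorem popular (c : Finset α → ℝ) (F : ℝ) (hF : Frac c F) (hne : (supp1 c).Nonempty) :
    ∃ i : α, (∃ s, c s ≠ 0 ∧ i ∈ s) ∧
      ((supp1 c).card : ℝ) ≤ F * ((supp1 c).filter (fun s => i ∈ s)).card := by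
  classical
  have hmem : ∀ s, s ∈ supp1 c ↔ c s ≠ 0 ∧ s ≠ ∅ := by intro s; simp [supp1]
  obtain ⟨s0, hs0⟩ := hne
  obtain ⟨i0, hi0⟩ := Finset.nonempty_iff_ne_empty.2 ((hmem s0).1 hs0).2
  obtain ⟨i, _, hi⟩ := Finset.exists_max_image (Finset.univ : Finset α)
    (fun i => ((supp1 c).filter (fun s => i ∈ s)).card) ⟨i0, Finset.mem_univ _⟩
  have hpos : 0 < ((supp1 c).filter (fun s => i ∈ s)).card :=
    lt_of_lt_of_le (Finset.card_pos.2 ⟨s0, Finset.mem_filter.2 ⟨hs0, hi0⟩⟩) (hi i0 (Finset.mem_univ _))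
  obtain ⟨s1, hs1⟩ := Finset.card_pos.1 hpos
  rw [Finset.mem_filter] at hs1
  refine ⟨i, ⟨s1, ((hmem _).1 hs1.1).1, hs1.2⟩, ?_⟩
  have hmin : ∀ s : {s // s ∈ supp1 c}, ∃ t, t ⊆ s.1 ∧ t ∈ supp1 c ∧ ∀ u, u ∈ supp1 c → u ⊆ t → u = t := by
    intro s
    obtain ⟨t, ht, htm⟩ := Finset.exists_min_image ((supp1 c).filter (fun t => t ⊆ s.1)) Finset.card
      ⟨s.1, by simp [s.2]⟩
    rw [Finset.mem_filter] at ht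
    refine ⟨t, ht.2, ht.1, fun u hu hut => ?_⟩
    exact Finset.eq_of_subset_of_card_le hut (htm u (Finset.mem_filter.2 ⟨hu, hut.trans ht.2⟩))
  choose W hW1 hW2 hW3 using hmin
  have := hF ∅ {s // s ∈ supp1 c} (fun _ => 1) W ((supp1 c).filter (fun s => i ∈ s)).card
    (by positivity) (fun _ => zero_le_one) (by
      intro s _
      rw [Finset.empty_union]
      have e : ev c (W s) = c ∅ + c (W s) := by
        unfold ev
        have hne := ((hmem _).1 (hW2 s)).2
        rw [← Finset.sum_pair (Ne.symm hne)]
        symm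
        apply Finset.sum_subset
        · intro u hu
          rw [Finset.mem_insert, Finset.mem_singleton] at hu
          rcases hu with rfl | rfl <;> simp
        · intro u hu hu'
          rw [Finset.mem_insert, Finset.mem_singleton] at hu'
          by_contra h
          rw [not_or] at hu'
          exact hu'.2 (hW3 s u ((hmem _).2 ⟨h, hu'.1⟩) (Finset.mem_powerset.1 hu))
      have e0 : ev c ∅ = c ∅ := by simp [ev]
      rw [e, e0]
      have := ((hmem _).1 (hW2 s)).1
      simpa using this) (by
      intro j _
      refine le_trans ?_ (Nat.cast_le.2 (hi j (Finset.mem_univ _)))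
      rw [Finset.card_filter]
      push_cast
      rw [← Finset.sum_coe_sort (supp1 c)]
      apply Finset.sum_le_sum
      intro s _
      by_cases h : j ∈ W s
      · simp [h, hW1 s h]
      · simp only [h, if_false]
        split_ifs <;> norm_num)
  simpa using this

noncomputable def r0 (i : α) (c : Finset α → ℝ) (s : Finset α) : ℝ := if i ∈ s then 0 else c s
noncomputable def r1 (i : α) (c : Finset α → ℝ) (s : Finset α) : ℝ :=
  if i ∈ s then 0 else c s + c (insert i s)

theorem ev_r0 (i : α) (c : Finset α → ℝ) (x : Finset α) : ev (r0 i c) x = ev c (x.erase i) := by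
  unfold ev
  symm
  apply Finset.sum_subset_zero_on_sdiff
  · exact Finset.powerset_mono.2 (Finset.erase_subset _ _)
  · intro s hs
    rw [Finset.mem_sdiff, Finset.mem_powerset, Finset.mem_powerset] at hs
    unfold r0
    rw [if_pos]
    by_contra h
    exact hs.2 (Finset.subset_erase.2 ⟨hs.1, h⟩)
  · intro s hs
    rw [Finset.mem_powerset, Finset.subset_erase] at hs
    simp [r0, hs.2]

theorem ev_r1 (i : α) (c : Finset α → ℝ) (x : Finset α) : ev (r1 i c) x = ev c (insert i x) := by
  have h1 : ev (r1 i c) x = ev (r1 i c) (x.erase i) := by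
    have : r1 i c = r0 i (r1 i c) := by
      funext s; unfold r0 r1; split_ifs <;> rfl
    rw [this, ev_r0, ev_r0, Finset.erase_idem]
  have h2 : insert i x = insert i (x.erase i) := by
    ext j; by_cases h : j = i <;> simp [h]
  rw [h1, h2]
  unfold ev
  rw [Finset.sum_powerset_insert (Finset.notMem_erase i x), ← Finset.sum_add_distrib]
  apply Finset.sum_congr rfl
  intro s hs
  rw [Finset.mem_powerset, Finset.subset_erase] at hs
  simp [r1, hs.2]

noncomputable def spr (c : Finset α → ℝ) : ℕ := (Finset.univ.filter (fun s => c s ≠ 0)).card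
noncomputable def live (c : Finset α → ℝ) : Finset α :=
  Finset.univ.filter (fun j => ∃ s, c s ≠ 0 ∧ j ∈ s)
noncomputable def L1 (c : Finset α → ℝ) : ℝ := ∑ s, |c s|

theorem spr_r0 (i : α) (c : Finset α → ℝ) : spr (r0 i c) ≤ spr c := by
  apply Finset.card_le_card
  intro s
  simp only [Finset.mem_filter, Finset.mem_univ, true_and]
  unfold r0
  split_ifs <;> simp

theorem r1_ne {i : α} {c : Finset α → ℝ} {s : Finset α} (h : r1 i c s ≠ 0) :
    i ∉ s ∧ (c s ≠ 0 ∨ c (insert i s) ≠ 0) := by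
  unfold r1 at h
  split_ifs at h with hi
  · exact absurd rfl h
  · refine ⟨hi, ?_⟩
    by_contra hc
    push Not at hc
    exact h (by rw [hc.1, hc.2, add_zero])

theorem spr_r1 (i : α) (c : Finset α → ℝ) : spr (r1 i c) ≤ spr c := by
  refine le_trans (Finset.card_le_card ?_) (Finset.card_image_le (f := fun s => Finset.erase s i))
  intro s hs
  simp only [Finset.mem_filter, Finset.mem_univ, true_and] at hs
  obtain ⟨hi, h | h⟩ := r1_ne hs
  · exact Finset.mem_image.2 ⟨s, by simpa using h, Finset.erase_eq_of_notMem hi⟩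
  · exact Finset.mem_image.2 ⟨insert i s, by simpa using h, Finset.erase_insert hi⟩

theorem supp1_r1 (i : α) (c : Finset α → ℝ) : (supp1 (r1 i c)).card ≤ (supp1 c).card := by
  refine le_trans (Finset.card_le_card ?_) (Finset.card_image_le (f := fun s => Finset.erase s i))
  intro s hs
  simp only [supp1, Finset.mem_filter, Finset.mem_univ, true_and] at hs
  obtain ⟨hi, h | h⟩ := r1_ne hs.1
  · exact Finset.mem_image.2 ⟨s, by simpa [supp1] using ⟨h, hs.2⟩, Finset.erase_eq_of_notMem hi⟩
  · exact Finset.mem_image.2 ⟨insert i s, by simpa [supp1] using h, Finset.erase_insert hi⟩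

theorem supp1_r0 (i : α) (c : Finset α → ℝ) :
    (supp1 (r0 i c)).card + ((supp1 c).filter (fun s => i ∈ s)).card = (supp1 c).card := by
  rw [← Finset.card_filter_add_card_filter_not (s := supp1 c) (fun s => i ∈ s), add_comm]
  congr 2
  ext s
  simp only [supp1, Finset.mem_filter, Finset.mem_univ, true_and]
  unfold r0
  split_ifs with h <;> simp [h]

theorem live_r1 (i : α) (c : Finset α → ℝ) (hi : i ∈ live c) :
    (live (r1 i c)).card < (live c).card := by
  apply Finset.card_lt_card
  rw [Finset.ssubset_iff_of_subset]
  · refine ⟨i, hi, ?_⟩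
    simp only [live, Finset.mem_filter, Finset.mem_univ, true_and]
    rintro ⟨s, h, his⟩
    exact (r1_ne h).1 his
  · intro j
    simp only [live, Finset.mem_filter, Finset.mem_univ, true_and]
    rintro ⟨s, h, hjs⟩
    obtain ⟨_, h | h⟩ := r1_ne h
    · exact ⟨s, h, hjs⟩
    · exact ⟨_, h, Finset.mem_insert_of_mem hjs⟩

theorem L1_split (i : α) (c : Finset α → ℝ) : L1 c ≤ 2 * L1 (r0 i c) + L1 (r1 i c) := by
  have key : ∀ g : Finset α → ℝ, ∑ s, g s =
      ∑ s ∈ (Finset.univ.erase i).powerset, (g s + g (insert i s)) := by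
    intro g
    have : (Finset.univ : Finset (Finset α)) = (insert i (Finset.univ.erase i)).powerset := by
      rw [Finset.insert_erase (Finset.mem_univ i), Finset.powerset_univ]
    rw [this, Finset.sum_powerset_insert (Finset.notMem_erase i _), ← Finset.sum_add_distrib]
  unfold L1
  rw [key, key (fun s => |r0 i c s|), key (fun s => |r1 i c s|), Finset.mul_sum,
    ← Finset.sum_add_distrib]
  apply Finset.sum_le_sum
  intro s hs
  rw [Finset.mem_powerset, Finset.subset_erase] at hs
  simp only [r0, r1, hs.2, if_false, Finset.mem_insert_self, if_true, abs_zero, add_zero]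
  have := abs_sub (c s + c (insert i s)) (c s)
  rw [add_sub_cancel_left] at this
  linarith

theorem L1_const (c : Finset α → ℝ) (hb : ∀ x, ev c x = 0 ∨ ev c x = 1)
    (h : supp1 c = ∅) : L1 c ≤ 1 := by
  have h0 : ∀ s, s ≠ ∅ → c s = 0 := by
    intro s hs
    by_contra hc
    have : s ∈ supp1 c := by simp [supp1, hc, hs]
    rw [h] at this
    simp at this
  have : L1 c = |c ∅| := by
    unfold L1
    apply Finset.sum_eq_single
    · intro s _ hs; rw [h0 s hs, abs_zero]
    · simp
  rw [this]
  have e : ev c ∅ = c ∅ := by simp [ev]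
  rcases hb ∅ with h | h <;> rw [e] at h <;> rw [h] <;> norm_num

theorem L1_rec (d : ℕ) (F : ℝ) (hF : F = 8 * ((8 * d^2 + 1 : ℕ) : ℝ)^2) (t : ℕ) :
    ∀ c : Finset α → ℝ, (∀ x, ev c x = 0 ∨ ev c x = 1) → 4 * spr c ≤ 2 ^ d →
      ((supp1 c).card : ℝ) * (1 - 1/F)^t < 1 → L1 c ≤ (2 * Fintype.card α + 1 : ℝ)^t := by
  have hF1 : 1 ≤ F := by
    rw [hF]; push_cast; nlinarith [sq_nonneg (d:ℝ)]
  have hx0 : 0 ≤ 1 - 1/F := by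
    rw [sub_nonneg, div_le_one (by linarith)]; exact hF1
  induction t with
  | zero =>
    intro c hb hs hc
    simp only [pow_zero, mul_one] at hc ⊢
    apply L1_const c hb
    rw [← Finset.card_eq_zero]
    have : (supp1 c).card < 1 := by exact_mod_cast hc
    omega
  | succ t ih =>
    set B : ℝ := (2 * Fintype.card α + 1 : ℝ)^t with hB
    have hB1 : 1 ≤ B := one_le_pow₀ (by linarith [Nat.cast_nonneg (α := ℝ) (Fintype.card α)])
    have inner : ∀ v : ℕ, ∀ c : Finset α → ℝ, (live c).card ≤ v →
        (∀ x, ev c x = 0 ∨ ev c x = 1) → 4 * spr c ≤ 2 ^ d →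
        ((supp1 c).card : ℝ) * (1 - 1/F)^(t+1) < 1 → L1 c ≤ 1 + 2 * v * B := by
      intro v
      induction v with
      | zero =>
        intro c hv hb hs hc
        have : supp1 c = ∅ := by
          rw [Finset.eq_empty_iff_forall_notMem]
          intro s hs
          simp only [supp1, Finset.mem_filter, Finset.mem_univ, true_and] at hs
          obtain ⟨j, hj⟩ := Finset.nonempty_iff_ne_empty.2 hs.2
          have hjl : j ∈ live c := by
            simp only [live, Finset.mem_filter, Finset.mem_univ, true_and]
            exact ⟨s, hs.1, hj⟩
          have := Finset.card_pos.2 ⟨j, hjl⟩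
          omega
        have := L1_const c hb this
        simpa using this
      | succ v ihv =>
        intro c hv hb hs hc
        rcases Finset.eq_empty_or_nonempty (supp1 c) with he | hne
        · have := L1_const c hb he
          have : 0 ≤ 2 * ((v+1 : ℕ):ℝ) * B := by positivity
          linarith
        · have hfr : Frac c F := by rw [hF]; exact frac_main c hb d hs
          obtain ⟨i, hil, hi⟩ := popular c F hfr hne
          have hil' : i ∈ live c := by
            simp only [live, Finset.mem_filter, Finset.mem_univ, true_and]; exact hil
          have h1 : L1 (r1 i c) ≤ 1 + 2 * v * B := by
            apply ihv
            · have := live_r1 i c hil'; omega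
            · intro x; rw [ev_r1]; exact hb _
            · have := spr_r1 i c; omega
            · refine lt_of_le_of_lt ?_ hc
              have : ((supp1 (r1 i c)).card : ℝ) ≤ (supp1 c).card := by
                exact_mod_cast supp1_r1 i c
              gcongr
          have h0 : L1 (r0 i c) ≤ B := by
            apply ih
            · intro x; rw [ev_r0]; exact hb _
            · have := spr_r0 i c; omega
            · refine lt_of_le_of_lt ?_ hc
              rw [pow_succ', ← mul_assoc]
              gcongr
              have h := supp1_r0 i c
              have h' : ((supp1 (r0 i c)).card : ℝ) + ((supp1 c).filter (fun s => i ∈ s)).card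
                = (supp1 c).card := by exact_mod_cast h
              have : ((supp1 c).card : ℝ) / F ≤ ((supp1 c).filter (fun s => i ∈ s)).card := by
                rw [div_le_iff₀ (by linarith)]; linarith
              have e : ((supp1 c).card : ℝ) * (1 - 1/F) = (supp1 c).card - (supp1 c).card / F := by ring
              rw [e]; linarith
          have := L1_split i c
          push_cast
          linarith
    intro c hb hs hc
    have := inner (Fintype.card α) c (Finset.card_le_univ _) hb hs hc
    rw [pow_succ, ← hB]
    linarith
end rec

/-- For boolean `f` on `n ≥ 2` variables with sparsity `r ≥ 2`, the L1 norm of the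
coefficients satisfies `‖f‖₁ ≤ n^{C·(log₂ r)^5}` for an absolute constant `C > 0`. -/
theorem stmt16 :
    ∃ C : ℝ, 0 < C ∧
      ∀ (n : ℕ) (f : Finset (Fin n) → ℝ),
        2 ≤ n →
        (∀ x, f x = 0 ∨ f x = 1) →
        2 ≤ sparsity f →
        (∑ s : Finset (Fin n), |coeff f s|) ≤
          (n : ℝ) ^ (C * (Real.logb 2 (sparsity f)) ^ 5) := by
  refine ⟨399387, by norm_num, ?_⟩
  intro n f hn hf hr
  set r := sparsity f with hrdef
  have hspr : spr (coeff f) = r := by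
    rw [hrdef, sparsity, spr, ← Set.ncard_coe_finset]
    congr 1
    ext s; simp
  set l := Real.logb 2 r with hl
  have hr' : (2:ℝ) ≤ r := by exact_mod_cast hr
  have hrpos : (0:ℝ) < r := by linarith
  have hl1 : 1 ≤ l := by
    rw [hl, Real.le_logb_iff_rpow_le (by norm_num) hrpos]; simpa using hr'
  set d := ⌈l⌉₊ + 2 with hd
  have h4 : 4 * spr (coeff f) ≤ 2 ^ d := by
    rw [hspr]
    have h : (r:ℝ) ≤ 2 ^ ⌈l⌉₊ := by
      have e : (r:ℝ) = (2:ℝ) ^ l := (Real.rpow_logb (by norm_num) (by norm_num) hrpos).symm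
      rw [e, ← Real.rpow_natCast]
      exact Real.rpow_le_rpow_of_exponent_le (by norm_num) (Nat.le_ceil l)
    have : r ≤ 2 ^ ⌈l⌉₊ := by exact_mod_cast h
    rw [hd, pow_add]
    omega
  have hdl : (d:ℝ) ≤ 4 * l := by
    have := Nat.ceil_lt_add_one (show 0 ≤ l by linarith)
    rw [hd]; push_cast; linarith
  set F : ℝ := 8 * ((8 * d^2 + 1 : ℕ) : ℝ)^2 with hF
  have hd2 : ((8 * d^2 + 1 : ℕ) : ℝ) ≤ 129 * l^2 := by
    push_cast
    have : (d:ℝ)^2 ≤ (4*l)^2 := by gcongr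
    nlinarith
  have hFl : F ≤ 133128 * l^4 := by
    have : ((8 * d^2 + 1 : ℕ) : ℝ)^2 ≤ (129 * l^2)^2 := by gcongr
    rw [hF]
    nlinarith
  have hF1 : 1 ≤ F := by
    rw [hF]; push_cast; nlinarith [sq_nonneg (d:ℝ)]
  set t := ⌊F * Real.log r⌋₊ + 1 with ht
  have hlog0 : 0 ≤ Real.log r := Real.log_nonneg (by linarith)
  have hlogl : Real.log r ≤ l := by
    rw [hl, Real.logb, le_div_iff₀ (Real.log_pos (by norm_num))]
    have : Real.log 2 ≤ 1 := by linarith [Real.log_two_lt_d9]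
    nlinarith
  have htl : (t:ℝ) ≤ 133129 * l^5 := by
    have h1 := Nat.floor_le (show 0 ≤ F * Real.log r by positivity)
    have h2 : F * Real.log r ≤ (133128 * l^4) * l := by gcongr
    have h3 : 1 ≤ l^5 := one_le_pow₀ hl1
    rw [ht]; push_cast
    nlinarith
  have htF : F * Real.log r < t := by
    rw [ht]; push_cast; exact Nat.lt_floor_add_one _
  have hsmall : ((supp1 (coeff f)).card : ℝ) * (1 - 1/F)^t < 1 := by
    have h1 : ((supp1 (coeff f)).card : ℝ) ≤ r := by
      rw [← hspr]
      have : (supp1 (coeff f)).card ≤ spr (coeff f) := by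
        apply Finset.card_le_card
        intro s hs
        simp only [supp1, Finset.mem_filter, Finset.mem_univ, true_and] at hs ⊢
        exact hs.1
      exact_mod_cast this
    have hx0 : 0 ≤ 1 - 1/F := by
      rw [sub_nonneg, div_le_one (by linarith)]; exact hF1
    have h2 : (1 - 1/F)^t ≤ Real.exp (-(t/F)) := by
      have : 1 - 1/F ≤ Real.exp (-(1/F)) := by
        have := Real.add_one_le_exp (-(1/F)); linarith
      calc (1 - 1/F)^t ≤ (Real.exp (-(1/F)))^t := by gcongr
        _ = _ := by rw [← Real.exp_nat_mul]; congr 1; ring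
    have h3 : Real.exp (-(t/F)) < Real.exp (- Real.log r) := by
      rw [Real.exp_lt_exp, neg_lt_neg_iff, lt_div_iff₀ (by linarith)]
      linarith
    rw [Real.exp_neg (Real.log r), Real.exp_log hrpos] at h3
    calc ((supp1 (coeff f)).card : ℝ) * (1 - 1/F)^t ≤ r * (1 - 1/F)^t := by gcongr
      _ ≤ r * Real.exp (-(t/F)) := by gcongr
      _ < r * (r:ℝ)⁻¹ := by gcongr
      _ = 1 := mul_inv_cancel₀ hrpos.ne'
  have hmain := L1_rec d F hF t (coeff f) (fun x => by rw [ev_coeff]; exact hf x) h4 hsmall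
  rw [Fintype.card_fin] at hmain
  have hn' : (2:ℝ) ≤ n := by exact_mod_cast hn
  calc (∑ s : Finset (Fin n), |coeff f s|) ≤ (2 * (n:ℝ) + 1)^t := hmain
    _ ≤ ((n:ℝ)^3)^t := by
        gcongr
        nlinarith [mul_nonneg (sub_nonneg.2 hn') (sub_nonneg.2 hn'), sq_nonneg (n:ℝ)]
    _ = (n:ℝ) ^ ((3 * t : ℕ) : ℝ) := by rw [← pow_mul, Real.rpow_natCast]
    _ ≤ (n : ℝ) ^ (399387 * l ^ 5) := by
        apply Real.rpow_le_rpow_of_exponent_le (by linarith)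
        push_cast; linarith
end

section
/- For every prime power m there exist n = m² + m + 1 and a boolean function f : {0,1}^n → {0,1} such that MBS(f, 0^n) = 1 while there exists a p-smooth probability distribution supported on W(f, 0^n) with p = (m+1)/(m²+m+1); in particular FMBS(f, 0^n) ≥ (m²+m+1)/(m+1) ≥ m. (Concretely, f is the OR over the lines ℓ of the projective plane of order m of the AND of the variables indexed by the points of ℓ.) -/
open Configuration in
lemma exists_plane (K : Type) [Field K] [Fintype K] (m : ℕ) (hK : Nat.card K = m) :
    ∃ (P : Type) (_ : Fintype P) (_ : DecidableEq P) (I : P → P → Prop),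
      Fintype.card P = m ^ 2 + m + 1 ∧ (∀ l l', ∃ p, I l p ∧ I l' p) ∧
      ∀ p, Nat.card {l // I l p} = m + 1 := by
  classical
  let P := Projectivization K (Fin 3 → K)
  haveI : Finite P := by infer_instance
  letI : Fintype P := Fintype.ofFinite P
  have hc : Fintype.card P = m ^ 2 + m + 1 := by
    rw [← Nat.card_eq_fintype_card, Projectivization.card_of_finrank K (Fin 3 → K) (n := 3) (by simp)]
    rw [hK]; simp [Finset.sum_range_succ]
    ring
  have ho : ProjectivePlane.order P P = m := by
    have h := ProjectivePlane.card_points P P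
    rw [hc] at h
    nlinarith
  refine ⟨P, inferInstance, inferInstance, fun l p => p ∈ l, hc, ?_, ?_⟩
  · intro l l'
    by_cases h : l = l'
    · subst h
      have h2 := ProjectivePlane.two_lt_pointCount P l
      have : Nonempty {p : P // p ∈ l} := by
        by_contra hne
        rw [not_nonempty_iff] at hne
        simp [pointCount] at h2
      obtain ⟨p, hp⟩ := this
      exact ⟨p, hp, hp⟩
    · exact ⟨HasPoints.mkPoint h, HasPoints.mkPoint_ax h⟩
  · intro p
    have := ProjectivePlane.lineCount_eq (P := P) (L := P) p
    rw [ho] at this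
    exact this

lemma exists_field_card (m : ℕ) (hm : IsPrimePow m) :
    ∃ (K : Type) (_ : Field K) (_ : Fintype K), Nat.card K = m := by
  obtain ⟨p, k, hp, hk, rfl⟩ := hm
  haveI : Fact p.Prime := ⟨hp.nat_prime⟩
  exact ⟨GaloisField p k, inferInstance, Fintype.ofFinite _, GaloisField.card p k hk.ne'⟩

/-- Projective-plane separation between `MBS` and `FMBS` at a point: for every prime
power `m` there is a boolean function `f` on `n = m² + m + 1` variables with
`MBS(f, 0^n) = 1` (the family `W(f,0^n) = {w : f w ≠ f ∅}` is nonempty and contains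
no two disjoint members), while there is a `p`-smooth probability distribution
supported on `W(f, 0^n)` with `p = (m+1)/(m²+m+1)`; in particular
`FMBS(f, 0^n) ≥ (m²+m+1)/(m+1) ≥ m`. -/
theorem stmt17 (m : ℕ) (hm : IsPrimePow m) :
    ∃ f : Finset (Fin (m ^ 2 + m + 1)) → Bool,
      -- MBS(f, 0^n) = 1
      ({w : Finset (Fin (m ^ 2 + m + 1)) | f w ≠ f ∅}.Nonempty ∧
        ∀ w1 ∈ {w : Finset (Fin (m ^ 2 + m + 1)) | f w ≠ f ∅},
        ∀ w2 ∈ {w : Finset (Fin (m ^ 2 + m + 1)) | f w ≠ f ∅},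
          ¬ Disjoint w1 w2) ∧
      -- a ((m+1)/(m²+m+1))-smooth distribution supported on W(f, 0^n)
      (∃ D : Finset (Fin (m ^ 2 + m + 1)) → ℝ,
        (∀ w, 0 ≤ D w) ∧
        (∑ w : Finset (Fin (m ^ 2 + m + 1)), D w) = 1 ∧
        (∀ w, D w ≠ 0 → f w ≠ f ∅) ∧
        (∀ i : Fin (m ^ 2 + m + 1),
          (∑ w ∈ Finset.univ.filter (fun w : Finset (Fin (m ^ 2 + m + 1)) => i ∈ w), D w) ≤
            ((m : ℝ) + 1) / ((m : ℝ) ^ 2 + m + 1))) := by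
  classical
  obtain ⟨K, _, _, hK⟩ := exists_field_card m hm
  obtain ⟨P, _, _, hP, hc, hl⟩ := exists_plane K m hK
  have e : P ≃ Fin (m ^ 2 + m + 1) := Fintype.equivFinOfCardEq hc
  let S : P → Finset (Fin (m ^ 2 + m + 1)) := fun l => Finset.univ.filter (fun i => hP l (e.symm i))
  have hS : ∀ l i, i ∈ S l ↔ hP l (e.symm i) := by intro l i; simp [S]
  have hmeet : ∀ l l', ∃ i, i ∈ S l ∧ i ∈ S l' := by
    intro l l'
    obtain ⟨p, h1, h2⟩ := hl.1 l l'
    exact ⟨e p, by simpa [hS] using h1, by simpa [hS] using h2⟩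
  let f : Finset (Fin (m ^ 2 + m + 1)) → Bool := fun w => decide (∃ l, S l ⊆ w)
  have hf0 : f ∅ = false := by
    simp only [f, decide_eq_false_iff_not]
    rintro ⟨l, h⟩
    obtain ⟨i, hi, -⟩ := hmeet l l
    simpa using h hi
  have hf : ∀ w, f w ≠ f ∅ ↔ ∃ l, S l ⊆ w := by
    intro w
    rw [hf0]
    simp [f]
  have hn : ((m : ℝ) ^ 2 + m + 1) ≠ 0 := by positivity
  refine ⟨f, ⟨⟨S (e.symm 0), (hf _).2 ⟨_, subset_rfl⟩⟩, ?_⟩,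
    fun w => ∑ l : P, if S l = w then 1 / ((m : ℝ) ^ 2 + m + 1) else 0, ?_, ?_, ?_, ?_⟩
  · intro w1 h1 w2 h2 hd
    obtain ⟨l1, h1⟩ := (hf _).1 h1
    obtain ⟨l2, h2⟩ := (hf _).1 h2
    obtain ⟨i, hi1, hi2⟩ := hmeet l1 l2
    exact Finset.disjoint_left.1 hd (h1 hi1) (h2 hi2)
  · intro w
    exact Finset.sum_nonneg fun l _ => by split_ifs <;> positivity
  · rw [Finset.sum_comm]
    simp [hc]
    field_simp
  · intro w hw
    obtain ⟨l, -, h⟩ := Finset.exists_ne_zero_of_sum_ne_zero hw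
    refine (hf w).2 ⟨l, ?_⟩
    by_cases hh : S l = w
    · exact hh.subset
    · simp [hh] at h
  · intro i
    rw [Finset.sum_comm]
    simp only [Finset.sum_ite_eq, Finset.mem_filter, Finset.mem_univ, true_and, hS]
    rw [← Finset.sum_filter, Finset.sum_const, nsmul_eq_mul]
    have := hl.2 (e.symm i)
    rw [Nat.card_eq_fintype_card, Fintype.card_subtype] at this
    rw [this]
    push_cast
    rw [mul_one_div]
end

section
/- Let n ≥ 2 be even and let Maj : {0,1}^n → {0,1} be the majority function Maj(z) = 1 iff Σ_i z_i ≥ n/2. Then: (1) the minimum size of a hitting set for mon(Maj) is exactly n/2 + 1 (so HSC(Maj, 0^n) = n/2 + 1); and (2) the uniform distribution on [n] satisfies Σ_{i ∈ w} 1/n ≥ 1/2 for every w ∈ mon(Maj) (so FHSC(Maj, 0^n) ≤ 2). -/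
/-- The set system of non-constant monomials of `f`. -/
def mon {n : ℕ} (f : Finset (Fin n) → ℝ) : Set (Finset (Fin n)) :=
  {s | coeff f s ≠ 0 ∧ s ≠ ∅}

/-- The majority function `Maj(z) = 1` iff `|z| ≥ n/2`. -/
noncomputable def Maj (n : ℕ) : Finset (Fin n) → ℝ :=
  fun z => if n / 2 ≤ z.card then 1 else 0

lemma coeff_small {n : ℕ} (s : Finset (Fin n)) (h : s.card < n / 2) : coeff (Maj n) s = 0 := by
  unfold coeff Maj
  apply Finset.sum_eq_zero
  intro t ht
  have := Finset.card_le_card (Finset.mem_powerset.1 ht)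
  rw [if_neg (by omega), mul_zero]

lemma coeff_mid {n : ℕ} (s : Finset (Fin n)) (h : s.card = n / 2) : coeff (Maj n) s = 1 := by
  unfold coeff Maj
  rw [Finset.sum_eq_single s]
  · simp [h]
  · intro t ht hne
    have := Finset.card_lt_card ((Finset.mem_powerset.1 ht).ssubset_of_ne hne)
    rw [if_neg (by omega), mul_zero]
  · intro h
    simp at h

lemma mon_card {n : ℕ} {s : Finset (Fin n)} (h : s ∈ mon (Maj n)) : n / 2 ≤ s.card := by
  by_contra hc
  exact h.1 (coeff_small s (by omega))

/-- For even `n ≥ 2`: (1) the minimum hitting set size for `mon(Maj)` is exactly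
`n/2 + 1` (so `HSC(Maj, 0^n) = n/2 + 1`), and (2) the uniform distribution on `[n]`
gives every monomial weight at least `1/2` (so `FHSC(Maj, 0^n) ≤ 2`). -/
theorem stmt18 (n : ℕ) (hn : 2 ≤ n) (heven : Even n) :
    (∃ H : Finset (Fin n), H.card = n / 2 + 1 ∧ ∀ s ∈ mon (Maj n), (H ∩ s).Nonempty) ∧
    (∀ H : Finset (Fin n), (∀ s ∈ mon (Maj n), (H ∩ s).Nonempty) → n / 2 + 1 ≤ H.card) ∧
    (∀ w ∈ mon (Maj n), (1 : ℝ) / 2 ≤ ∑ _i ∈ w, (1 : ℝ) / n) := by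
  obtain ⟨k, hk⟩ := heven
  refine ⟨?_, ?_, ?_⟩
  · obtain ⟨H, -, hH⟩ := Finset.exists_subset_card_eq (s := (Finset.univ : Finset (Fin n)))
      (n := n / 2 + 1) (by rw [Finset.card_univ, Fintype.card_fin]; omega)
    refine ⟨H, hH, fun s hs => ?_⟩
    have h1 := mon_card hs
    have h2 := Finset.card_union_add_card_inter H s
    have h3 := Finset.card_le_univ (H ∪ s)
    rw [Fintype.card_fin] at h3
    apply Finset.card_pos.1
    omega
  · intro H hH
    by_contra hc
    have h1 := Finset.card_compl H
    rw [Fintype.card_fin] at h1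
    obtain ⟨s, hs, hcard⟩ := Finset.exists_subset_card_eq (s := Hᶜ) (n := n / 2) (by omega)
    obtain ⟨x, hx⟩ := hH s ⟨by rw [coeff_mid s hcard]; exact one_ne_zero, by
      rintro rfl
      rw [Finset.card_empty] at hcard
      omega⟩
    rw [Finset.mem_inter] at hx
    exact Finset.mem_compl.1 (hs hx.2) hx.1
  · intro w hw
    have h1 := mon_card hw
    have h2 : (n : ℝ) ≤ 2 * w.card := by
      have : n ≤ 2 * w.card := by omega
      exact_mod_cast this
    have hpos : (0 : ℝ) < n := by
      have : 0 < n := by omega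
      exact_mod_cast this
    rw [Finset.sum_const, nsmul_eq_mul, mul_one_div, div_le_div_iff₀ two_pos hpos]
    linarith
end
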